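/- Let F be a maximal hke collection and let x, y be two distinct elements of ⋃F. Then the following are equivalent: (1) x ≈ y; (2) {x, y} ∩ S ≠ ∅ for every S ∈ F; (3) {x, y} ⊄ S for every S ∈ F. -/

import Mathlib

open Finset

/-- The union of a finite collection of finite sets. -/
def famUnion (Γ : Finset (Finset ℕ)) : Finset ℕ := Γ.sup id

/-- The intersection of a finite collection of finite sets
(equal to the usual intersection when the collection is nonempty). -/
def famInter (Γ : Finset (Finset ℕ)) : Finset ℕ :=
  (Γ.sup id).filter (fun x => ∀ A ∈ Γ, x ∈ A)

/-- `F` is a hereditary König–Egerváry (hke) collection with `α(F) = α`: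
`α` is a positive integer and `|⋃Γ| + |⋂Γ| = 2α` for every nonempty subcollection `Γ` of `F`. -/
def IsHKE (F : Finset (Finset ℕ)) (α : ℕ) : Prop :=
  0 < α ∧ ∀ Γ ⊆ F, Γ.Nonempty → (famUnion Γ).card + (famInter Γ).card = 2 * α

/-- `F` is a maximal hke collection: it is an hke collection and no collection
properly containing it is an hke collection. -/
def IsMaxHKE (F : Finset (Finset ℕ)) : Prop :=
  (∃ α, IsHKE F α) ∧ ∀ F' : Finset (Finset ℕ), F ⊂ F' → ¬ ∃ β, IsHKE F' β

/-- The relation `≈` on `⋃F`: `x ≈ y` iff `x = y` or there are `A, D ∈ F`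
with `A − D = {x}` and `D − A = {y}`. -/
def ApproxRel (F : Finset (Finset ℕ)) (x y : ℕ) : Prop :=
  x = y ∨ ∃ A ∈ F, ∃ D ∈ F, A \ D = {x} ∧ D \ A = {y}

lemma mem_famUnion {Γ : Finset (Finset ℕ)} {x : ℕ} : x ∈ famUnion Γ ↔ ∃ A ∈ Γ, x ∈ A := by
  simp [famUnion, Finset.mem_sup]

lemma mem_famInter {Γ : Finset (Finset ℕ)} (hΓ : Γ.Nonempty) {x : ℕ} :
    x ∈ famInter Γ ↔ ∀ A ∈ Γ, x ∈ A := by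
  obtain ⟨A, hA⟩ := hΓ
  simp only [famInter, mem_filter, Finset.mem_sup, id]
  exact ⟨fun h => h.2, fun h => ⟨⟨A, hA, h A hA⟩, h⟩⟩

/-- Elements in all members of the first family and in no member of the second. -/
def cell (U : Finset ℕ) (P Q : Finset (Finset ℕ)) : Finset ℕ :=
  U.filter (fun x => (∀ A ∈ P, x ∈ A) ∧ ∀ B ∈ Q, x ∉ B)

lemma cell_split (U : Finset ℕ) (P Q : Finset (Finset ℕ)) (A : Finset ℕ) :
    (cell U P Q).card = (cell U P (insert A Q)).card + (cell U (insert A P) Q).card := by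
  rw [← card_union_of_disjoint]
  · congr 1
    ext x
    simp only [cell, mem_union, mem_filter, mem_insert, forall_eq_or_imp]
    tauto
  · rw [Finset.disjoint_left]
    intro x
    simp only [cell, mem_filter, mem_insert, forall_eq_or_imp]
    tauto

lemma cell_base {F : Finset (Finset ℕ)} {α : ℕ} (h : IsHKE F α) (P : Finset (Finset ℕ))
    (hP : P ⊆ F) (hPn : P.Nonempty) (A : Finset ℕ) (hA : A ∈ F) :
    (cell (famUnion F) P {A}).card = (cell (famUnion F) {A} P).card := by
  have h1 := h.2 P hP hPn
  have h2 := h.2 (insert A P) (insert_subset hA hP) (insert_nonempty _ _)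
  have e1 : famInter P = cell (famUnion F) P {A} ∪ famInter (insert A P) := by
    ext x
    rw [mem_union, mem_famInter hPn, mem_famInter (insert_nonempty _ _)]
    simp only [cell, mem_filter, mem_singleton, forall_eq, mem_insert, forall_eq_or_imp,
      mem_famUnion]
    obtain ⟨B, hB⟩ := hPn
    constructor
    · intro hx
      by_cases hxA : x ∈ A
      · exact Or.inr ⟨hxA, hx⟩
      · exact Or.inl ⟨⟨B, hP hB, hx B hB⟩, hx, hxA⟩
    · tauto
  have e2 : famUnion (insert A P) = cell (famUnion F) {A} P ∪ famUnion P := by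
    ext x
    simp only [cell, mem_union, mem_filter, mem_singleton, forall_eq, mem_insert,
      mem_famUnion, exists_eq_or_imp]
    constructor
    · intro hx
      by_cases hxP : ∃ B ∈ P, x ∈ B
      · exact Or.inr hxP
      · push Not at hxP
        rcases hx with hx | ⟨B, hB, hx⟩
        · exact Or.inl ⟨⟨A, hA, hx⟩, hx, hxP⟩
        · exact absurd hx (hxP B hB)
    · tauto
  have d1 : Disjoint (cell (famUnion F) P {A}) (famInter (insert A P)) := by
    rw [Finset.disjoint_left]
    intro x
    rw [mem_famInter (insert_nonempty _ _)]
    simp only [cell, mem_filter, mem_singleton, forall_eq, mem_insert, forall_eq_or_imp]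
    tauto
  have d2 : Disjoint (cell (famUnion F) {A} P) (famUnion P) := by
    rw [Finset.disjoint_left]
    intro x
    simp only [cell, mem_filter, mem_singleton, forall_eq, mem_famUnion]
    rintro ⟨_, _, hx⟩ ⟨B, hB, hxB⟩
    exact hx B hB hxB
  have c1 := card_union_of_disjoint d1
  have c2 := card_union_of_disjoint d2
  rw [← e1] at c1
  rw [← e2] at c2
  omega

lemma cell_symm {F : Finset (Finset ℕ)} {α : ℕ} (h : IsHKE F α) (Q : Finset (Finset ℕ))
    (hQn : Q.Nonempty) : ∀ P : Finset (Finset ℕ), Q ⊆ F → P ⊆ F → P.Nonempty →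
    (cell (famUnion F) P Q).card = (cell (famUnion F) Q P).card := by
  induction hQn using Finset.Nonempty.cons_induction with
  | singleton A =>
    intro P hQ hP hPn
    exact cell_base h P hP hPn A (by simpa using hQ)
  | cons A Q hAQ hQn ih =>
    intro P hQ hP hPn
    rw [cons_eq_insert] at hQ ⊢
    rw [insert_subset_iff] at hQ
    have i1 := ih P hQ.2 hP hPn
    have i2 := ih (insert A P) hQ.2 (insert_subset hQ.1 hP) (insert_nonempty _ _)
    have s1 := cell_split (famUnion F) P Q A
    have s2 := cell_split (famUnion F) Q P A
    omega

/-- All transversals. -/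
def transv (T : Finset ℕ) (e : ℕ → ℕ) : Finset (Finset ℕ) :=
  (T ∪ T.image e).powerset.filter (fun S => ∀ x ∈ T, (x ∈ S ↔ e x ∉ S))

lemma mem_transv {T : Finset ℕ} {e : ℕ → ℕ} {S : Finset ℕ} :
    S ∈ transv T e ↔ S ⊆ T ∪ T.image e ∧ ∀ x ∈ T, (x ∈ S ↔ e x ∉ S) := by
  rw [transv, mem_filter, mem_powerset]

lemma transv_hke (T : Finset ℕ) (e : ℕ → ℕ) (hinj : Set.InjOn e T)
    (hd : ∀ x ∈ T, e x ∉ T) (hpos : 0 < T.card) : IsHKE (transv T e) T.card := by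
  refine ⟨hpos, fun Γ hΓ hn => ?_⟩
  have key : ∀ x ∈ T, (x ∈ famInter Γ ↔ e x ∉ famUnion Γ) := by
    intro x hx
    rw [mem_famInter hn, mem_famUnion]
    push Not
    exact forall₂_congr fun A hA => (mem_transv.1 (hΓ hA)).2 x hx
  have key2 : ∀ x ∈ T, (e x ∈ famInter Γ ↔ x ∉ famUnion Γ) := by
    intro x hx
    rw [mem_famInter hn, mem_famUnion]
    push Not
    refine forall₂_congr fun A hA => ?_
    have := (mem_transv.1 (hΓ hA)).2 x hx
    tauto
  have cnt : ∀ S : Finset ℕ, S ⊆ T ∪ T.image e →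
      S.card = (T.filter (· ∈ S)).card + (T.filter (fun x => e x ∈ S)).card := by
    intro S hS
    rw [← card_image_of_injOn (s := T.filter (fun x => e x ∈ S)) (f := e)
      (hinj.mono (by intro z hz; simp at hz; exact hz.1)), ← card_union_of_disjoint]
    · congr 1
      ext z
      simp only [mem_union, mem_filter, mem_image]
      constructor
      · intro hz
        have := hS hz
        simp only [mem_union, mem_image] at this
        rcases this with h | ⟨w, hw, rfl⟩
        · exact Or.inl ⟨h, hz⟩
        · exact Or.inr ⟨w, ⟨hw, hz⟩, rfl⟩
      · rintro (h | ⟨w, hw, rfl⟩)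
        · exact h.2
        · exact hw.2
    · rw [Finset.disjoint_left]
      intro z hz hz'
      simp only [mem_filter, mem_image] at hz hz'
      obtain ⟨w, hw, rfl⟩ := hz'
      exact hd w hw.1 hz.1
  have sU : famUnion Γ ⊆ T ∪ T.image e := by
    intro z hz
    obtain ⟨A, hA, hz⟩ := mem_famUnion.1 hz
    exact (mem_transv.1 (hΓ hA)).1 hz
  have sI : famInter Γ ⊆ T ∪ T.image e := by
    intro z hz
    obtain ⟨A, hA⟩ := hn
    exact (mem_transv.1 (hΓ hA)).1 ((mem_famInter ⟨A, hA⟩).1 hz A hA)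
  rw [cnt _ sU, cnt _ sI]
  have a1 : T.filter (· ∈ famInter Γ) = T.filter (fun x => ¬ e x ∈ famUnion Γ) :=
    filter_congr key
  have a2 : T.filter (fun x => e x ∈ famInter Γ) = T.filter (fun x => ¬ x ∈ famUnion Γ) :=
    filter_congr key2
  rw [a1, a2]
  have b1 := card_filter_add_card_filter_not (s := T) (fun x => e x ∈ famUnion Γ)
  have b2 := card_filter_add_card_filter_not (s := T) (fun x => x ∈ famUnion Γ)
  omega

lemma exists_inj_of_card (A B : Finset ℕ) (h : A.card = B.card) :
    ∃ f : ℕ → ℕ, Set.InjOn f A ∧ ∀ x ∈ A, f x ∈ B := by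
  let g := Finset.equivOfCardEq h
  refine ⟨fun x => if hx : x ∈ A then (g ⟨x, hx⟩ : ℕ) else 0, ?_, ?_⟩
  · intro x hx y hy hxy
    have hx' : x ∈ A := hx
    have hy' : y ∈ A := hy
    simp only [hx', hy', dif_pos] at hxy
    simpa using g.injective (Subtype.ext hxy)
  · intro x hx
    simp [hx]

lemma exists_transv {F : Finset (Finset ℕ)} {α : ℕ} (h : IsHKE F α) (T : Finset ℕ)
    (hT : T ∈ F) : ∃ e : ℕ → ℕ, Set.InjOn e T ∧ (∀ x ∈ T, e x ∉ T) ∧ F ⊆ transv T e := by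
  classical
  have hFn : F.Nonempty := ⟨T, hT⟩
  set U := famUnion F with hU
  set C := famInter F with hC
  let s : ℕ → Finset (Finset ℕ) := fun x => F.filter (fun A => x ∈ A)
  have hex : ∀ S : Finset (Finset ℕ), ∃ f : ℕ → ℕ, S ⊆ F → S.Nonempty → (F \ S).Nonempty →
      Set.InjOn f (cell U S (F \ S)) ∧ ∀ x ∈ cell U S (F \ S), f x ∈ cell U (F \ S) S := by
    intro S
    by_cases hS : S ⊆ F ∧ S.Nonempty ∧ (F \ S).Nonempty
    · obtain ⟨f, hf⟩ := exists_inj_of_card _ _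
        (cell_symm h (F \ S) hS.2.2 S sdiff_subset hS.1 hS.2.1)
      exact ⟨f, fun _ _ _ => hf⟩
    · exact ⟨id, fun a b c => absurd ⟨a, b, c⟩ hS⟩
  choose f hf using hex
  have hTU : T ⊆ U := fun x hx => mem_famUnion.2 ⟨T, hT, hx⟩
  have hCT : C ⊆ T := fun x hx => (mem_famInter hFn).1 hx T hT
  have hs1 : ∀ x, s x ⊆ F := fun x => filter_subset _ _
  have hs2 : ∀ x ∈ T, (s x).Nonempty := fun x hx => ⟨T, mem_filter.2 ⟨hT, hx⟩⟩
  have hs3 : ∀ x, x ∉ C → (F \ s x).Nonempty := by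
    intro x hx
    rw [hC, mem_famInter hFn] at hx
    push Not at hx
    obtain ⟨A, hA, hxA⟩ := hx
    exact ⟨A, by simp [s, hA, hxA]⟩
  have hsc : ∀ x ∈ T, x ∈ cell U (s x) (F \ s x) := by
    intro x hx
    simp only [cell, mem_filter, s, mem_sdiff]
    refine ⟨hTU hx, fun A hA => hA.2, fun B hB hxB => hB.2 ⟨hB.1, hxB⟩⟩
  have hgood : ∀ x ∈ T, x ∉ C → f (s x) x ∈ U ∧ ∀ A ∈ F, (x ∈ A ↔ f (s x) x ∉ A) := by
    intro x hx hxC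
    have := (hf (s x) (hs1 x) (hs2 x hx) (hs3 x hxC)).2 x (hsc x hx)
    simp only [cell, mem_filter] at this
    refine ⟨this.1, fun A hA => ⟨fun hxA => this.2.2 A (mem_filter.2 ⟨hA, hxA⟩), fun hn => ?_⟩⟩
    by_contra hxA
    exact hn (this.2.1 A (by simp [s, hA, hxA]))
  have hginj : Set.InjOn (fun x => f (s x) x) (T \ C : Finset ℕ) := by
    intro x hx y hy hxy
    simp only [coe_sdiff, Set.mem_sdiff, mem_coe] at hx hy hxy
    have gx := hgood x hx.1 hx.2
    have gy := hgood y hy.1 hy.2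
    have hsxy : s x = s y := by
      refine filter_congr fun A hA => ?_
      rw [gx.2 A hA, gy.2 A hA, hxy]
    have cx := hsc x hx.1
    have cy := hsc y hy.1
    rw [← hsxy] at cy hxy
    exact (hf (s x) (hs1 x) (hs2 x hx.1) (hs3 x hx.2)).1 cx cy hxy
  have hmaps : ∀ x ∈ T \ C, f (s x) x ∈ U \ T := by
    intro x hx
    rw [mem_sdiff] at hx ⊢
    have g := hgood x hx.1 hx.2
    exact ⟨g.1, (g.2 T hT).1 hx.1⟩
  have hcard : (U \ T).card ≤ (T \ C).card := by
    have h1 := h.2 F subset_rfl hFn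
    rw [← hU, ← hC] at h1
    have h2 := h.2 {T} (by simpa using hT) (singleton_nonempty _)
    have e1 : famUnion {T} = T := by ext z; simp [mem_famUnion]
    have e2 : famInter {T} = T := by ext z; simp [mem_famInter]
    rw [e1, e2] at h2
    rw [card_sdiff_of_subset hTU, card_sdiff_of_subset hCT]
    have := card_le_card hTU
    have := card_le_card hCT
    omega
  have hsurj : (T \ C).image (fun x => f (s x) x) = U \ T := by
    apply eq_of_subset_of_card_le
    · intro z hz
      obtain ⟨x, hx, rfl⟩ := mem_image.1 hz
      exact hmaps x hx
    · rw [card_image_of_injOn hginj]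
      exact hcard
  have hbig : ∀ x, x + (U.sup id + 1) ∉ U := by
    intro x hx
    have : id (x + (U.sup id + 1)) ≤ U.sup id := le_sup hx
    simp only [id] at this
    omega
  refine ⟨fun x => if x ∈ C then x + (U.sup id + 1) else f (s x) x, ?_, ?_, ?_⟩
  · intro x hx y hy hxy
    have hx' : x ∈ T := hx
    have hy' : y ∈ T := hy
    by_cases hxC : x ∈ C <;> by_cases hyC : y ∈ C <;> simp only [hxC, hyC, if_true, if_false] at hxy
    · omega
    · exact absurd (hxy ▸ (hgood y hy' hyC).1) (hbig x)
    · exact absurd (hxy ▸ (hgood x hx' hxC).1) (hbig y)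
    · exact hginj (by simp [hx', hxC]) (by simp [hy', hyC]) hxy
  · intro x hx
    by_cases hxC : x ∈ C <;> simp only [hxC, if_true, if_false]
    · exact fun hh => hbig x (hTU hh)
    · exact ((hgood x hx hxC).2 T hT).1 hx
  · intro A hA
    have hAU : A ⊆ U := fun z hz => mem_famUnion.2 ⟨A, hA, hz⟩
    rw [mem_transv]
    constructor
    · intro z hz
      rw [mem_union]
      by_cases hzT : z ∈ T
      · exact Or.inl hzT
      · right
        have : z ∈ U \ T := mem_sdiff.2 ⟨hAU hz, hzT⟩
        rw [← hsurj] at this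
        obtain ⟨x, hx, rfl⟩ := mem_image.1 this
        rw [mem_sdiff] at hx
        exact mem_image.2 ⟨x, hx.1, by simp [hx.2]⟩
    · intro x hx
      by_cases hxC : x ∈ C <;> simp only [hxC, if_true, if_false]
      · have := (mem_famInter hFn).1 hxC A hA
        simp only [this, true_iff]
        exact fun hh => hbig x (hAU hh)
      · exact (hgood x hx hxC).2 A hA

lemma exists_choice (T : Finset ℕ) (e : ℕ → ℕ) (hinj : Set.InjOn e T)
    (hd : ∀ x ∈ T, e x ∉ T) (P : ℕ → Prop) :
    ∃ S ∈ transv T e, ∀ x ∈ T, (x ∈ S ↔ P x) ∧ (e x ∈ S ↔ ¬ P x) := by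
  classical
  have main : ∀ x ∈ T, (x ∈ T.filter P ∪ (T.filter (fun z => ¬ P z)).image e ↔ P x) ∧
      (e x ∈ T.filter P ∪ (T.filter (fun z => ¬ P z)).image e ↔ ¬ P x) := by
    intro x hx
    simp only [mem_union, mem_filter, mem_image]
    refine ⟨⟨?_, fun hp => Or.inl ⟨hx, hp⟩⟩, ⟨?_, fun hp => Or.inr ⟨x, ⟨hx, hp⟩, rfl⟩⟩⟩
    · rintro (hh | ⟨w, hw, rfl⟩)
      · exact hh.2
      · exact absurd hx (hd w hw.1)
    · rintro (hh | ⟨w, hw, hwx⟩)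
      · exact absurd hh.1 (hd x hx)
      · rw [← hinj hw.1 hx hwx]; exact hw.2
  refine ⟨_, mem_transv.2 ⟨?_, ?_⟩, main⟩
  · exact union_subset_union (filter_subset _ _) (image_subset_image (filter_subset _ _))
  · intro x hx
    rw [(main x hx).1, (main x hx).2, not_not]

lemma pair_approx (T : Finset ℕ) (e : ℕ → ℕ) (hinj : Set.InjOn e T)
    (hd : ∀ x ∈ T, e x ∉ T) (x : ℕ) (hx : x ∈ T) :
    ∃ A ∈ transv T e, ∃ D ∈ transv T e, A \ D = {x} ∧ D \ A = {e x} := by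
  obtain ⟨A, hA, hA'⟩ := exists_choice T e hinj hd (fun _ => True)
  obtain ⟨D, hD, hD'⟩ := exists_choice T e hinj hd (fun z => z ≠ x)
  have hAs := (mem_transv.1 hA).1
  have hDs := (mem_transv.1 hD).1
  refine ⟨A, hA, D, hD, ?_, ?_⟩
  · ext z
    rw [mem_sdiff, mem_singleton]
    constructor
    · rintro ⟨h1, h2⟩
      rcases mem_union.1 (hAs h1) with hz | hz
      · by_contra hne
        exact h2 ((hD' z hz).1.2 hne)
      · obtain ⟨w, hw, rfl⟩ := mem_image.1 hz
        exact absurd trivial ((hA' w hw).2.1 h1)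
    · rintro rfl
      exact ⟨(hA' z hx).1.2 trivial, fun hh => (hD' z hx).1.1 hh rfl⟩
  · ext z
    rw [mem_sdiff, mem_singleton]
    constructor
    · rintro ⟨h1, h2⟩
      rcases mem_union.1 (hDs h1) with hz | hz
      · exact absurd ((hA' z hz).1.2 trivial) h2
      · obtain ⟨w, hw, rfl⟩ := mem_image.1 hz
        have := (hD' w hw).2.1 h1
        rw [not_not.1 this]
    · rintro rfl
      exact ⟨(hD' x hx).2.2 (by simp), fun hh => (hA' x hx).2.1 hh trivial⟩

lemma not_pair (T : Finset ℕ) (e : ℕ → ℕ) (hinj : Set.InjOn e T)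
    (hd : ∀ x ∈ T, e x ∉ T) (x y : ℕ) (hx : x ∈ T ∪ T.image e) (hy : y ∈ T ∪ T.image e)
    (h1 : ¬ (x ∈ T ∧ y = e x)) (h2 : ¬ (y ∈ T ∧ x = e y)) :
    (∃ S ∈ transv T e, x ∈ S ∧ y ∈ S) ∧ (∃ S ∈ transv T e, x ∉ S ∧ y ∉ S) := by
  have ch := exists_choice T e hinj hd
  rcases mem_union.1 hx with hx | hx <;> rcases mem_union.1 hy with hy | hy
  · obtain ⟨A, hA, hA'⟩ := ch (fun _ => True)
    obtain ⟨D, hD, hD'⟩ := ch (fun _ => False)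
    refine ⟨⟨A, hA, ?_⟩, ⟨D, hD, ?_⟩⟩
    · simp [(hA' x hx).1, (hA' y hy).1]
    · simp [(hD' x hx).1, (hD' y hy).1]
  · obtain ⟨w, hw, rfl⟩ := mem_image.1 hy
    have hne : w ≠ x := by rintro rfl; exact h1 ⟨hx, rfl⟩
    obtain ⟨A, hA, hA'⟩ := ch (fun z => z = x)
    obtain ⟨D, hD, hD'⟩ := ch (fun z => z ≠ x)
    refine ⟨⟨A, hA, ?_⟩, ⟨D, hD, ?_⟩⟩
    · simp [(hA' x hx).1, (hA' w hw).2, hne]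
    · simp [(hD' x hx).1, (hD' w hw).2, hne]
  · obtain ⟨w, hw, rfl⟩ := mem_image.1 hx
    have hne : w ≠ y := by rintro rfl; exact h2 ⟨hy, rfl⟩
    obtain ⟨A, hA, hA'⟩ := ch (fun z => z = y)
    obtain ⟨D, hD, hD'⟩ := ch (fun z => z ≠ y)
    refine ⟨⟨A, hA, ?_⟩, ⟨D, hD, ?_⟩⟩
    · simp [(hA' y hy).1, (hA' w hw).2, hne]
    · simp [(hD' y hy).1, (hD' w hw).2, hne]
  · obtain ⟨v, hv, rfl⟩ := mem_image.1 hx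
    obtain ⟨w, hw, rfl⟩ := mem_image.1 hy
    obtain ⟨A, hA, hA'⟩ := ch (fun _ => False)
    obtain ⟨D, hD, hD'⟩ := ch (fun _ => True)
    refine ⟨⟨A, hA, ?_⟩, ⟨D, hD, ?_⟩⟩
    · simp [(hA' v hv).2, (hA' w hw).2]
    · simp [(hD' v hv).2, (hD' w hw).2]

/-- in a maximal hke collection `F`, for distinct `x, y ∈ ⋃F`, the following
are equivalent: (1) `x ≈ y`; (2) `{x, y} ∩ S ≠ ∅` for every `S ∈ F`;
(3) `{x, y} ⊄ S` for every `S ∈ F`. -/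
theorem approxRel_iff_meets_iff_not_subset (F : Finset (Finset ℕ)) (h : IsMaxHKE F)
    (x y : ℕ) (hx : x ∈ famUnion F) (hy : y ∈ famUnion F) (hxy : x ≠ y) :
    (ApproxRel F x y ↔ ∀ S ∈ F, (({x, y} : Finset ℕ) ∩ S).Nonempty) ∧
    (ApproxRel F x y ↔ ∀ S ∈ F, ¬ (({x, y} : Finset ℕ) ⊆ S)) := by
  obtain ⟨⟨α, hα⟩, hmax⟩ := h
  obtain ⟨T, hT, hxT⟩ := mem_famUnion.1 hx
  obtain ⟨e, hinj, hd, hsub⟩ := exists_transv hα T hT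
  have hF : F = transv T e := by
    by_contra hne
    exact hmax _ (Finset.ssubset_iff_subset_ne.2 ⟨hsub, hne⟩)
      ⟨_, transv_hke T e hinj hd (card_pos.2 ⟨x, hxT⟩)⟩
  have hm : ∀ z ∈ famUnion F, z ∈ T ∪ T.image e := by
    intro z hz
    obtain ⟨A, hA, hz⟩ := mem_famUnion.1 hz
    exact (mem_transv.1 (hsub hA)).1 hz
  have hx' := hm x hx
  have hy' := hm y hy
  have r2 : ∀ S : Finset ℕ, (({x, y} : Finset ℕ) ∩ S).Nonempty ↔ x ∈ S ∨ y ∈ S := by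
    intro S
    simp [Finset.Nonempty, mem_inter, or_and_right, exists_or]
  have r3 : ∀ S : Finset ℕ, (({x, y} : Finset ℕ) ⊆ S) ↔ x ∈ S ∧ y ∈ S := by
    intro S
    simp [insert_subset_iff]
  simp only [r2, r3]
  have htr : ∀ S ∈ F, ∀ z ∈ T, (z ∈ S ↔ e z ∉ S) := fun S hS => (mem_transv.1 (hsub hS)).2
  by_cases h1 : x ∈ T ∧ y = e x
  · obtain ⟨hxT, rfl⟩ := h1
    have ha : ApproxRel F x (e x) := by
      right; rw [hF]; exact pair_approx T e hinj hd x hxT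
    refine ⟨⟨fun _ S hS => ?_, fun _ => ha⟩, ⟨fun _ S hS => ?_, fun _ => ha⟩⟩ <;>
    · have := htr S hS x hxT
      tauto
  by_cases h2 : y ∈ T ∧ x = e y
  · obtain ⟨hyT, rfl⟩ := h2
    have ha : ApproxRel F (e y) y := by
      right
      obtain ⟨A, hA, D, hD, p, q⟩ := pair_approx T e hinj hd y hyT
      rw [hF]; exact ⟨D, hD, A, hA, q, p⟩
    refine ⟨⟨fun _ S hS => ?_, fun _ => ha⟩, ⟨fun _ S hS => ?_, fun _ => ha⟩⟩ <;>
    · have := htr S hS y hyT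
      tauto
  obtain ⟨⟨S, hS, hxS, hyS⟩, ⟨R, hR, hxR, hyR⟩⟩ := not_pair T e hinj hd x y hx' hy' h1 h2
  rw [← hF] at hS hR
  have hna : ¬ ApproxRel F x y := by
    rintro (hh | ⟨A, hA, D, hD, p, q⟩)
    · exact hxy hh
    · have hxAD : x ∈ A \ D := by simp [p]
      rw [mem_sdiff] at hxAD
      rcases mem_union.1 hx' with hz | hz
      · have a := (htr A hA x hz).1 hxAD.1
        have b := not_not.1 (mt (htr D hD x hz).2 hxAD.2)
        have : e x ∈ D \ A := mem_sdiff.2 ⟨b, a⟩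
        rw [q, mem_singleton] at this
        exact h1 ⟨hz, this.symm⟩
      · obtain ⟨w, hw, rfl⟩ := mem_image.1 hz
        have a : w ∉ A := fun hh => (htr A hA w hw).1 hh hxAD.1
        have b := (htr D hD w hw).2 hxAD.2
        have : w ∈ D \ A := mem_sdiff.2 ⟨b, a⟩
        rw [q, mem_singleton] at this
        subst this
        exact h2 ⟨hw, rfl⟩
  refine ⟨⟨fun hh => absurd hh hna, fun hh => ?_⟩, ⟨fun hh => absurd hh hna, fun hh => ?_⟩⟩
  · rcases hh R hR with hh | hh
    · exact absurd hh hxR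
    · exact absurd hh hyR
  · exact absurd ⟨hxS, hyS⟩ (hh S hS)
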